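/- Let A generate a contraction semigroup on a Banach space X and B ∈ C²_b(X,X) with ‖DB(U)‖ ≤ M′ and ‖D²B(U)‖ ≤ M″ on a ball of radius R. Writing e^{tJ(U)} for the semigroup generated by J(U) = A + DB(U), the map U ↦ e^{tJ(U)} is Fréchet differentiable on the R-ball and satisfies ‖D_U e^{tJ(U)}‖ ≤ M″ t e^{M′ t} for all t ≥ 0. -/

import Mathlib

open MeasureTheory Metric

lemma aux_joint {X : Type*} [NormedAddCommGroup X] [NormedSpace ℝ X]
    (F : ℝ → X →L[ℝ] X) (g : ℝ → ℝ) (hg : Continuous g) (hF : ∀ x, Continuous fun s => F s x)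
    (hb : ∀ s, ‖F s‖ ≤ g s) : Continuous fun p : ℝ × X => F p.1 p.2 := by
  rw [continuous_iff_continuousAt]
  rintro ⟨s₀, x₀⟩
  rw [ContinuousAt, tendsto_iff_norm_sub_tendsto_zero]
  have h1 : Continuous fun p : ℝ × X => g p.1 * ‖p.2 - x₀‖ + ‖F p.1 x₀ - F s₀ x₀‖ := by
    have := (hF x₀).comp (continuous_fst : Continuous fun p : ℝ × X => p.1)
    simp only [Function.comp_def] at this
    fun_prop
  have h2 := h1.tendsto (s₀, x₀)
  simp only [sub_self, norm_zero, mul_zero, add_zero] at h2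
  refine squeeze_zero (fun _ => norm_nonneg _) (fun p => ?_) h2
  have : F p.1 p.2 - F s₀ x₀ = F p.1 (p.2 - x₀) + (F p.1 x₀ - F s₀ x₀) := by
    rw [map_sub]; abel
  rw [this]
  refine (norm_add_le _ _).trans ?_
  gcongr
  exact (F p.1).le_of_opNorm_le (hb _) _

lemma aux_fubini {X : Type*} [NormedAddCommGroup X] [NormedSpace ℝ X]
    (G : ℝ → ℝ → X) (hG : Continuous (Function.uncurry G)) (t : ℝ) (ht : 0 ≤ t) :
    ∫ s in (0:ℝ)..t, ∫ r in s..t, G r s = ∫ r in (0:ℝ)..t, ∫ s in (0:ℝ)..r, G r s := by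
  set A : Set (ℝ × ℝ) := {p | p.2 < p.1} with hA
  have hAm : MeasurableSet A := (isOpen_lt continuous_snd continuous_fst).measurableSet
  have e1 : ∀ s ∈ Set.Ioc 0 t, ∫ r in s..t, G r s
      = ∫ r in Set.Ioc 0 t, A.indicator (Function.uncurry G) (r, s) := by
    intro s hs
    rw [intervalIntegral.integral_of_le hs.2]
    have : (fun r => A.indicator (Function.uncurry G) (r, s))
        = (Set.Ioi s).indicator (fun r => G r s) := by
      ext r; simp [A, Set.indicator]
    rw [this, setIntegral_indicator measurableSet_Ioi]
    congr 2
    ext r; simp only [Set.mem_Ioc, Set.mem_inter_iff, Set.mem_Ioi]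
    have := hs.1
    constructor
    · rintro ⟨a, b⟩; exact ⟨⟨by linarith, b⟩, a⟩
    · rintro ⟨⟨a, b⟩, c⟩; exact ⟨c, b⟩
  have e2 : ∀ r ∈ Set.Ioc 0 t, ∫ s in (0:ℝ)..r, G r s
      = ∫ s in Set.Ioc 0 t, A.indicator (Function.uncurry G) (r, s) := by
    intro r hr
    rw [intervalIntegral.integral_of_le hr.1.le, integral_Ioc_eq_integral_Ioo]
    have : (fun s => A.indicator (Function.uncurry G) (r, s))
        = (Set.Iio r).indicator (fun s => G r s) := by
      ext s; simp [A, Set.indicator]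
    rw [this, setIntegral_indicator measurableSet_Iio]
    congr 2
    ext s; simp only [Set.mem_Ioc, Set.mem_Ioo, Set.mem_inter_iff, Set.mem_Iio]
    have := hr.2
    constructor
    · rintro ⟨a, b⟩; exact ⟨⟨a, by linarith⟩, b⟩
    · rintro ⟨⟨a, b⟩, c⟩; exact ⟨a, c⟩
  rw [intervalIntegral.integral_of_le ht, intervalIntegral.integral_of_le ht,
    setIntegral_congr_fun measurableSet_Ioc e1, setIntegral_congr_fun measurableSet_Ioc e2]
  symm
  refine integral_integral_swap (f := fun r s => A.indicator (Function.uncurry G) (r, s)) ?_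
  have : Function.uncurry (fun r s => A.indicator (Function.uncurry G) (r, s))
      = A.indicator (Function.uncurry G) := by ext ⟨r, s⟩; rfl
  rw [this]
  refine Integrable.indicator ?_ hAm
  rw [Measure.prod_restrict]
  have : IntegrableOn (Function.uncurry G) (Set.Icc 0 t ×ˢ Set.Icc 0 t) (volume.prod volume) :=
    hG.continuousOn.integrableOn_compact (isCompact_Icc.prod isCompact_Icc)
  exact this.mono_set (Set.prod_mono Set.Ioc_subset_Icc_self Set.Ioc_subset_Icc_self)

lemma aux_uniq {X : Type*} [NormedAddCommGroup X] [NormedSpace ℝ X]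
    (S : ℝ → X →L[ℝ] X) (hb : ∀ s, ‖S s‖ ≤ 1) (K : X →L[ℝ] X) (w : ℝ → X) (hw : Continuous w)
    (h : ∀ t, 0 ≤ t → w t = ∫ s in (0:ℝ)..t, S (t - s) (K (w s))) :
    ∀ t, 0 ≤ t → w t = 0 := by
  intro t ht
  set φ : ℝ → ℝ := fun t => ∫ s in (0:ℝ)..t, ‖w s‖ with hφ
  have hd : ∀ x, HasDerivAt φ (‖w x‖) x := fun x =>
    intervalIntegral.integral_hasDerivAt_right (hw.norm.intervalIntegrable _ _)
      (hw.norm.stronglyMeasurableAtFilter _ _) hw.norm.continuousAt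
  have hbd : ∀ x, 0 ≤ x → ‖w x‖ ≤ ‖K‖ * ‖φ x‖ := by
    intro x hx
    have h0 : 0 ≤ φ x := intervalIntegral.integral_nonneg hx (fun _ _ => norm_nonneg _)
    rw [Real.norm_of_nonneg h0]
    rw [h x hx, hφ]
    simp only
    rw [← intervalIntegral.integral_const_mul]
    refine intervalIntegral.norm_integral_le_of_norm_le hx ?_
      ((continuous_const.mul hw.norm).intervalIntegrable _ _)
    refine Filter.Eventually.of_forall fun s _ => ?_
    calc _ ≤ 1 * ‖K (w s)‖ := (S _).le_of_opNorm_le (hb _) _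
      _ ≤ _ := by rw [one_mul]; exact K.le_opNorm _
  have := eq_zero_of_abs_deriv_le_mul_abs_self_of_eq_zero_right (f := φ) (f' := fun x => ‖w x‖)
    (K := ‖K‖) (a := 0) (b := t)
    (fun x _ => (hd x).continuousAt.continuousWithinAt) (fun x _ => (hd x).hasDerivWithinAt)
    (by simp [hφ]) (fun x hx => by simpa using hbd x hx.1) t ⟨ht, le_rfl⟩
  have h2 := hbd t ht
  rw [this] at h2
  simpa using h2

lemma aux_voc {X : Type*} [NormedAddCommGroup X] [NormedSpace ℝ X] [CompleteSpace X]
    (S T : ℝ → X →L[ℝ] X) (hb : ∀ s, ‖S s‖ ≤ 1) (K : X →L[ℝ] X)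
    (hS : Continuous fun p : ℝ × X => S p.1 p.2) (hT : Continuous fun p : ℝ × X => T p.1 p.2)
    (hD : ∀ t, 0 ≤ t → ∀ x, T t x = S t x + ∫ s in (0:ℝ)..t, S (t - s) (K (T s x)))
    (f z : ℝ → X) (hf : Continuous f) (hz : Continuous z)
    (h : ∀ t, 0 ≤ t → z t = ∫ s in (0:ℝ)..t, S (t - s) (K (z s) + f s)) :
    ∀ t, 0 ≤ t → z t = ∫ s in (0:ℝ)..t, T (t - s) (f s) := by
  set y : ℝ → X := fun t => ∫ s in (0:ℝ)..t, T (t - s) (f s) with hy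
  have cT : ∀ {Y : Type _} [TopologicalSpace Y] (a : Y → ℝ) (b : Y → X), Continuous a →
      Continuous b → Continuous fun q => T (a q) (b q) := fun a b ha hb =>
    hT.comp (ha.prodMk hb)
  have cS : ∀ {Y : Type _} [TopologicalSpace Y] (a : Y → ℝ) (b : Y → X), Continuous a →
      Continuous b → Continuous fun q => S (a q) (b q) := fun a b ha hb =>
    hS.comp (ha.prodMk hb)
  have hyc : Continuous y := by
    refine intervalIntegral.continuous_parametric_intervalIntegral_of_continuous
      (f := fun t s => T (t - s) (f s)) ?_ continuous_id
    exact cT (fun q : ℝ × ℝ => q.1 - q.2) (fun q => f q.2) (by fun_prop) (by fun_prop)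
  have hyeq : ∀ t, 0 ≤ t → y t = ∫ s in (0:ℝ)..t, S (t - s) (K (y s) + f s) := by
    intro t ht
    have i1 : Continuous fun s => S (t - s) (f s) := cS _ _ (by fun_prop) hf
    have i2 : Continuous fun s => S (t - s) (K (y s)) := cS _ _ (by fun_prop) (by fun_prop)
    have cG : Continuous (Function.uncurry fun r s : ℝ => S (t - r) (K (T (r - s) (f s)))) := by
      refine cS (fun q : ℝ × ℝ => t - q.1) _ (by fun_prop) (K.continuous.comp ?_)
      exact cT (fun q : ℝ × ℝ => q.1 - q.2) (fun q => f q.2) (by fun_prop) (by fun_prop)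
    have e1 : y t = ∫ s in (0:ℝ)..t, (S (t - s) (f s)
        + ∫ r in s..t, S (t - r) (K (T (r - s) (f s)))) := by
      refine intervalIntegral.integral_congr fun s hs => ?_
      rw [Set.uIcc_of_le ht] at hs
      rw [hD (t - s) (by linarith [hs.2])]
      congr 1
      have := intervalIntegral.integral_comp_sub_right (a := s) (b := t)
        (fun r => S (t - s - r) (K (T r (f s)))) s
      simp only [sub_self] at this
      rw [← this]
      refine intervalIntegral.integral_congr fun r _ => ?_
      rw [show t - s - (r - s) = t - r by ring]
    have i3 : Continuous fun s => ∫ r in s..t, S (t - r) (K (T (r - s) (f s))) := by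
      simp_rw [intervalIntegral.integral_symm t]
      refine Continuous.neg ?_
      refine intervalIntegral.continuous_parametric_intervalIntegral_of_continuous
        (f := fun s r => S (t - r) (K (T (r - s) (f s)))) ?_ continuous_id
      exact cG.comp continuous_swap
    rw [e1, intervalIntegral.integral_add (i1.intervalIntegrable _ _) (i3.intervalIntegrable _ _),
      aux_fubini _ cG t ht]
    simp_rw [map_add]
    rw [intervalIntegral.integral_add (i2.intervalIntegrable _ _) (i1.intervalIntegrable _ _),
      add_comm]
    congr 1
    refine intervalIntegral.integral_congr fun r _ => ?_
    simp only [hy]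
    have c : Continuous fun s => T (r - s) (f s) := cT _ _ (by fun_prop) hf
    have := ((S (t - r)).comp K).intervalIntegral_comp_comm (c.intervalIntegrable 0 r
      (μ := volume))
    simpa using this
  have := aux_uniq S hb K (fun t => z t - y t) (hz.sub hyc) (fun t ht => by
    rw [h t ht, hyeq t ht, ← intervalIntegral.integral_sub]
    · refine intervalIntegral.integral_congr fun s _ => ?_
      simp only [map_add, map_sub]; abel
    · exact (cS _ _ (by fun_prop) (by fun_prop)).intervalIntegrable _ _
    · exact (cS _ _ (by fun_prop) (by fun_prop)).intervalIntegrable _ _)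
  intro t ht
  exact sub_eq_zero.mp (this t ht)

lemma aux_strong {X : Type*} [NormedAddCommGroup X] [NormedSpace ℝ X]
    (S T : ℝ → X →L[ℝ] X) (K : X →L[ℝ] X) (M' : ℝ) (hM' : 0 ≤ M') (hK : ‖K‖ ≤ M')
    (hS0 : S 0 = 1)
    (hScontr : ∀ t : ℝ, 0 ≤ t → ‖S t‖ ≤ 1)
    (hSsg : ∀ s t : ℝ, 0 ≤ s → 0 ≤ t → S (s + t) = (S s).comp (S t))
    (hTgrow : ∀ t : ℝ, 0 ≤ t → ‖T t‖ ≤ Real.exp (M' * t))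
    (hDuh : ∀ t : ℝ, 0 ≤ t → ∀ x : X,
      T t x = S t x + ∫ s in (0 : ℝ)..t, S (t - s) (K (T s x)))
    (hTcont : ∀ x : X, Continuous fun s => T s x) (x : X) :
    Continuous fun s => S (max s 0) x := by
  set η : ℝ → ℝ := fun r => ‖T r x - x‖ + M' * (Real.exp (M' * r) * ‖x‖) * |r - 0| with hη
  have hη0 : η 0 = 0 := by
    have := hDuh 0 le_rfl x
    simp [hS0] at this
    simp [hη, this]
  have hηc : Continuous η := by
    have := hTcont x
    fun_prop
  have h1 : ∀ r, 0 ≤ r → ‖S r x - x‖ ≤ η r := by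
    intro r hr
    have e : S r x - x = (T r x - x) - ∫ s in (0 : ℝ)..r, S (r - s) (K (T s x)) := by
      rw [hDuh r hr x]; abel
    rw [e]
    refine (norm_sub_le _ _).trans ?_
    simp only [hη]
    gcongr
    refine intervalIntegral.norm_integral_le_of_norm_le_const fun s hs => ?_
    rw [Set.uIoc_of_le hr] at hs
    calc _ ≤ 1 * ‖K (T s x)‖ := (S _).le_of_opNorm_le (hScontr _ (by linarith [hs.2])) _
      _ ≤ M' * ‖T s x‖ := by rw [one_mul]; exact K.le_of_opNorm_le hK _
      _ ≤ M' * (Real.exp (M' * s) * ‖x‖) := by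
        gcongr; exact (T s).le_of_opNorm_le (hTgrow s hs.1.le) _
      _ ≤ _ := by gcongr; exact hs.2
  have h2 : ∀ a b, 0 ≤ a → a ≤ b → ‖S b x - S a x‖ ≤ η |b - a| := by
    intro a b ha hab
    rw [abs_of_nonneg (sub_nonneg.2 hab)]
    refine le_trans ?_ (h1 _ (sub_nonneg.2 hab))
    have := hSsg a (b - a) ha (sub_nonneg.2 hab)
    rw [add_sub_cancel] at this
    rw [this, ContinuousLinearMap.comp_apply, ← map_sub]
    simpa using (S a).le_of_opNorm_le (hScontr a ha) (S (b - a) x - x)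
  have h3 : ∀ a b, 0 ≤ a → 0 ≤ b → ‖S b x - S a x‖ ≤ η |b - a| := by
    intro a b ha hb
    rcases le_total a b with h | h
    · exact h2 a b ha h
    · rw [norm_sub_rev, abs_sub_comm]; exact h2 b a hb h
  rw [continuous_iff_continuousAt]
  intro a
  rw [ContinuousAt, tendsto_iff_norm_sub_tendsto_zero]
  have c : Continuous fun b => η |max b 0 - max a 0| := by fun_prop
  have := c.tendsto a
  simp only [sub_self, abs_zero, hη0] at this
  exact squeeze_zero (fun _ => norm_nonneg _)
    (fun b => h3 _ _ (le_max_right _ _) (le_max_right _ _)) this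

theorem stmt11 {X : Type*} [NormedAddCommGroup X] [NormedSpace ℝ X] [CompleteSpace X]
    (S : ℝ → X →L[ℝ] X) (B : X → X) (B' : X → X →L[ℝ] X)
    (B'' : X → X →L[ℝ] (X →L[ℝ] X))
    (T : X → ℝ → X →L[ℝ] X) (R M' M'' : ℝ)
    (hR : 0 < R) (hM' : 0 ≤ M') (hM'' : 0 ≤ M'')
    (hS0 : S 0 = 1)
    (hScontr : ∀ t : ℝ, 0 ≤ t → ‖S t‖ ≤ 1)
    (hSsg : ∀ s t : ℝ, 0 ≤ s → 0 ≤ t → S (s + t) = (S s).comp (S t))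
    (hB' : ∀ U : X, HasFDerivAt B (B' U) U)
    (hB'bd : ∀ U ∈ closedBall (0 : X) R, ‖B' U‖ ≤ M')
    (hB'' : ∀ U ∈ closedBall (0 : X) R, HasFDerivAt B' (B'' U) U)
    (hB''bd : ∀ U ∈ closedBall (0 : X) R, ‖B'' U‖ ≤ M'')
    (hTgrow : ∀ U ∈ closedBall (0 : X) R, ∀ t : ℝ, 0 ≤ t → ‖T U t‖ ≤ Real.exp (M' * t))
    (hDuh : ∀ U ∈ closedBall (0 : X) R, ∀ t : ℝ, 0 ≤ t → ∀ x : X,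
      T U t x = S t x + ∫ s in (0 : ℝ)..t, S (t - s) (B' U (T U s x)))
    (hTcont : ∀ U ∈ closedBall (0 : X) R, ∀ x : X, Continuous fun s => T U s x) :
    ∀ t : ℝ, 0 ≤ t → ∀ U ∈ closedBall (0 : X) R,
      ∃ L : X →L[ℝ] (X →L[ℝ] X),
        HasFDerivWithinAt (fun V => T V t) L (closedBall (0 : X) R) U
        ∧ ‖L‖ ≤ M'' * t * Real.exp (M' * t) := by
  intro t ht U hU
  set S' : ℝ → X →L[ℝ] X := fun s => S (max s 0) with hS'
  set T' : X → ℝ → X →L[ℝ] X := fun V s => T V (max s 0) with hT'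
  have mx : ∀ s : ℝ, 0 ≤ s → max s 0 = s := fun s hs => max_eq_left hs
  have hS'b : ∀ s, ‖S' s‖ ≤ 1 := fun s => hScontr _ (le_max_right _ _)
  have hT'b : ∀ V ∈ closedBall (0 : X) R, ∀ s, ‖T' V s‖ ≤ Real.exp (M' * max s 0) :=
    fun V hV s => hTgrow V hV _ (le_max_right _ _)
  have hS'c : Continuous fun p : ℝ × X => S' p.1 p.2 :=
    aux_joint S' (fun _ => 1) continuous_const
      (aux_strong S (T U) (B' U) M' hM' (hB'bd U hU) hS0 hScontr hSsg (hTgrow U hU) (hDuh U hU)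
        (hTcont U hU)) hS'b
  have hT's : ∀ V ∈ closedBall (0 : X) R, ∀ x, Continuous fun s => T' V s x :=
    fun V hV x => (hTcont V hV x).comp (continuous_id.max continuous_const)
  have hT'c : ∀ V ∈ closedBall (0 : X) R, Continuous fun p : ℝ × X => T' V p.1 p.2 :=
    fun V hV => aux_joint (T' V) (fun s => Real.exp (M' * max s 0)) (by fun_prop) (hT's V hV)
      (hT'b V hV)
  have hD : ∀ V ∈ closedBall (0 : X) R, ∀ t, 0 ≤ t → ∀ x,
      T' V t x = S' t x + ∫ s in (0:ℝ)..t, S' (t - s) (B' V (T' V s x)) := by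
    intro V hV t ht x
    simp only [hT', hS', mx t ht]
    rw [hDuh V hV t ht x]
    congr 1
    refine intervalIntegral.integral_congr fun s hs => ?_
    rw [Set.uIcc_of_le ht] at hs
    rw [mx s hs.1, mx (t - s) (by linarith [hs.2])]
  have cSc : ∀ (t : ℝ) (b : ℝ → X), Continuous b → Continuous fun s => S' (t - s) (b s) :=
    fun t b hb => hS'c.comp (((continuous_const.sub continuous_id)).prodMk hb)
  have cTc : ∀ (t : ℝ) (b : ℝ → X), Continuous b → Continuous fun s => T' U (t - s) (b s) :=
    fun t b hb => (hT'c U hU).comp (((continuous_const.sub continuous_id)).prodMk hb)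
  -- bound for convolution integrals
  have hconv : ∀ (t : ℝ), 0 ≤ t → ∀ (b : ℝ → X) (C : ℝ),
      (∀ s, 0 ≤ s → s ≤ t → ‖b s‖ ≤ C * Real.exp (M' * s)) →
      ‖∫ s in (0:ℝ)..t, T' U (t - s) (b s)‖ ≤ C * t * Real.exp (M' * t) := by
    intro t ht b C hb
    have : ‖∫ s in (0:ℝ)..t, T' U (t - s) (b s)‖ ≤ (C * Real.exp (M' * t)) * |t - 0| := by
      refine intervalIntegral.norm_integral_le_of_norm_le_const fun s hs => ?_
      rw [Set.uIoc_of_le ht] at hs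
      calc _ ≤ Real.exp (M' * max (t - s) 0) * ‖b s‖ := (T' U _).le_of_opNorm_le (hT'b U hU _) _
        _ ≤ Real.exp (M' * (t - s)) * (C * Real.exp (M' * s)) := by
          rw [mx (t - s) (by linarith [hs.2])]
          gcongr
          exact hb s hs.1.le hs.2
        _ = C * (Real.exp (M' * (t - s)) * Real.exp (M' * s)) := by ring
        _ = _ := by rw [← Real.exp_add]; congr 2; ring
    rw [sub_zero, abs_of_nonneg ht] at this
    linarith
  have key : ∀ V ∈ closedBall (0 : X) R, ∀ x, ∀ t, 0 ≤ t → T' V t x - T' U t x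
      = ∫ s in (0:ℝ)..t, T' U (t - s) ((B' V - B' U) (T' V s x)) := by
    intro V hV x
    have c1 := hT's V hV x
    have c2 := hT's U hU x
    refine aux_voc S' (T' U) hS'b (B' U) hS'c (hT'c U hU) (hD U hU)
      (fun s => (B' V - B' U) (T' V s x)) (fun s => T' V s x - T' U s x) (by fun_prop)
      (by fun_prop) ?_
    intro t ht
    rw [hD V hV t ht x, hD U hU t ht x, add_sub_add_left_eq_sub,
      ← intervalIntegral.integral_sub]
    · refine intervalIntegral.integral_congr fun s _ => ?_
      simp only [map_sub, map_add, _root_.sub_apply]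
      abel
    · exact (cSc _ _ (by fun_prop)).intervalIntegrable _ _
    · exact (cSc _ _ (by fun_prop)).intervalIntegrable _ _
  have hTx : ∀ V ∈ closedBall (0 : X) R, ∀ s, 0 ≤ s → ∀ x, ‖T' V s x‖
      ≤ Real.exp (M' * s) * ‖x‖ := by
    intro V hV s hs x
    have := (T' V s).le_of_opNorm_le (hT'b V hV s) x
    rwa [mx s hs] at this
  have diffb : ∀ V ∈ closedBall (0 : X) R, ∀ x, ∀ t, 0 ≤ t → ‖T' V t x - T' U t x‖
      ≤ (‖B' V - B' U‖ * ‖x‖) * t * Real.exp (M' * t) := by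
    intro V hV x t ht
    rw [key V hV x t ht]
    refine hconv t ht _ _ fun s hs _ => ?_
    refine ((B' V - B' U).le_opNorm _).trans ?_
    have := mul_le_mul_of_nonneg_left (hTx V hV s hs x) (norm_nonneg (B' V - B' U))
    linarith
  have cc : ∀ H x, Continuous fun s => T' U (t - s) (B'' U H (T' U s x)) := fun H x =>
    cTc t _ ((B'' U H).continuous.comp (hT's U hU x))
  let L₀ : X →ₗ[ℝ] X →ₗ[ℝ] X := LinearMap.mk₂ ℝ
    (fun H x => ∫ s in (0:ℝ)..t, T' U (t - s) (B'' U H (T' U s x)))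
    (fun H H' x => by
      rw [← intervalIntegral.integral_add ((cc _ _).intervalIntegrable _ _)
        ((cc _ _).intervalIntegrable _ _)]
      simp)
    (fun c H x => by
      rw [← intervalIntegral.integral_smul]
      simp)
    (fun H x x' => by
      rw [← intervalIntegral.integral_add ((cc _ _).intervalIntegrable _ _)
        ((cc _ _).intervalIntegrable _ _)]
      simp)
    (fun c H x => by
      rw [← intervalIntegral.integral_smul]
      simp)
  have hL₀ : ∀ H x, L₀ H x = ∫ s in (0:ℝ)..t, T' U (t - s) (B'' U H (T' U s x)) :=
    fun H x => rfl
  have hL₀b : ∀ H x, ‖L₀ H x‖ ≤ M'' * t * Real.exp (M' * t) * ‖H‖ * ‖x‖ := by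
    intro H x
    rw [hL₀]
    have := hconv t ht (fun s => B'' U H (T' U s x)) (M'' * ‖H‖ * ‖x‖) (fun s hs _ => by
      have h1 := (B'' U H).le_of_opNorm_le ((B'' U).le_of_opNorm_le (hB''bd U hU) H) (T' U s x)
      have h2 := mul_le_mul_of_nonneg_left (hTx U hU s hs x)
        (mul_nonneg hM'' (norm_nonneg H))
      linarith)
    linarith
  refine ⟨L₀.mkContinuous₂ _ hL₀b, ?_, LinearMap.mkContinuous₂_norm_le _ (by positivity) _⟩
  set E := Real.exp (M' * t) with hE
  have hEpos : 0 < E := Real.exp_pos _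
  have err : ∀ V ∈ closedBall (0 : X) R,
      ‖T V t - T U t - L₀.mkContinuous₂ _ hL₀b (V - U)‖
        ≤ (t * E) * ‖B' V - B' U - B'' U (V - U)‖
          + (M'' * t * t * E) * (‖V - U‖ * ‖B' V - B' U‖) := by
    intro V hV
    refine ContinuousLinearMap.opNorm_le_bound _ (by positivity) fun x => ?_
    have c1 := hT's V hV x
    have e : (T V t - T U t - L₀.mkContinuous₂ _ hL₀b (V - U)) x
        = ∫ s in (0:ℝ)..t, T' U (t - s) ((B' V - B' U - B'' U (V - U)) (T' V s x)
          + B'' U (V - U) (T' V s x - T' U s x)) := by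
      have h1 := key V hV x t ht
      simp only [hT', mx t ht] at h1
      rw [_root_.sub_apply, _root_.sub_apply, h1,
        LinearMap.mkContinuous₂_apply, hL₀, ← intervalIntegral.integral_sub]
      · refine intervalIntegral.integral_congr fun s _ => ?_
        simp only [map_sub, map_add, _root_.sub_apply]
        abel
      · exact (cTc t (fun s => (B' V - B' U) (T' V s x)) (by fun_prop)).intervalIntegrable _ _
      · exact (cc _ _).intervalIntegrable _ _
    rw [e]
    have := hconv t ht (fun s => (B' V - B' U - B'' U (V - U)) (T' V s x)
          + B'' U (V - U) (T' V s x - T' U s x))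
      (‖B' V - B' U - B'' U (V - U)‖ * ‖x‖ + M'' * ‖V - U‖ * (‖B' V - B' U‖ * ‖x‖ * t))
      (fun s hs hst => by
        refine (norm_add_le _ _).trans ?_
        have h1 := (B' V - B' U - B'' U (V - U)).le_opNorm (T' V s x)
        have h2 := mul_le_mul_of_nonneg_left (hTx V hV s hs x)
          (norm_nonneg (B' V - B' U - B'' U (V - U)))
        have h3 := (B'' U (V - U)).le_of_opNorm_le ((B'' U).le_of_opNorm_le (hB''bd U hU) (V - U))
          (T' V s x - T' U s x)
        have h4 : ‖T' V s x - T' U s x‖ ≤ (‖B' V - B' U‖ * ‖x‖) * t * Real.exp (M' * s) := by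
          refine (diffb V hV x s hs).trans ?_
          gcongr
        have h5 := mul_le_mul_of_nonneg_left h4 (mul_nonneg hM'' (norm_nonneg (V - U)))
        linarith)
    refine this.trans (le_of_eq ?_)
    ring
  rw [hasFDerivWithinAt_iff_isLittleO]
  have o1 : (fun V => B' V - B' U - B'' U (V - U)) =o[nhdsWithin U (closedBall 0 R)]
      fun V => V - U := (hasFDerivWithinAt_iff_isLittleO).1 (hB'' U hU).hasFDerivWithinAt
  have o2 : (fun V => ‖V - U‖ * ‖B' V - B' U‖) =o[nhdsWithin U (closedBall 0 R)]
      fun V => ‖V - U‖ := by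
    have h0 : (fun V => ‖B' V - B' U‖) =o[nhdsWithin U (closedBall 0 R)] fun _ => (1:ℝ) := by
      rw [Asymptotics.isLittleO_one_iff]
      have := (hB'' U hU).continuousAt.tendsto
      rw [tendsto_iff_norm_sub_tendsto_zero] at this
      exact this.mono_left nhdsWithin_le_nhds
    have := (Asymptotics.isBigO_refl (fun V => ‖V - U‖) (nhdsWithin U (closedBall 0 R))).mul_isLittleO h0
    simpa using this
  have o3 := (o1.norm_norm.const_mul_left (t * E)).add (o2.const_mul_left (M'' * t * t * E))
  refine Asymptotics.IsBigO.trans_isLittleO (Asymptotics.IsBigO.of_bound 1 ?_)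
    (Asymptotics.isLittleO_norm_right.1 o3)
  filter_upwards [self_mem_nhdsWithin] with V hV
  rw [one_mul]
  exact (err V hV).trans (le_abs_self _)
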